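/- arXiv:2107.05316 — 2 statements merged into one kernel-verified Lean document; each statement's English description precedes it below -/
import Mathlib

section
/- Let u, v be smooth functions on S^2 with v compactly supported in an open set U, and let α be a smooth function on U satisfying (Δ+2)α = 0 on U. Then ∫_U [u(∇_A∇_B v - (1/2)(Δv)σ_{AB}) - v(∇_A∇_B u - (1/2)(Δu)σ_{AB})] ∇^A∇^B α = 0. -/
open MeasureTheory Real
noncomputable section

/-- Points of the stereographic chart of the round unit sphere `S²`
(the chart covers `S²` minus the north pole). -/
abbrev Pt := Fin 2 → ℝ

/-- Partial derivative `∂_a f`. -/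
def pd (a : Fin 2) (f : Pt → ℝ) (x : Pt) : ℝ := fderiv ℝ f x (Pi.single a 1)

/-- The round (unit sphere) metric `σ_{AB}` in stereographic coordinates. -/
def rnd (x : Pt) (a b : Fin 2) : ℝ :=
  (4 / (1 + x 0 ^ 2 + x 1 ^ 2) ^ 2) * (if a = b then 1 else 0)

/-- The inverse round metric `σ^{AB}`. -/
def rndInv (x : Pt) (a b : Fin 2) : ℝ :=
  ((1 + x 0 ^ 2 + x 1 ^ 2) ^ 2 / 4) * (if a = b then 1 else 0)

/-- The area form `ε_{AB}` of the round metric. -/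
def rndE (x : Pt) (a b : Fin 2) : ℝ :=
  (4 / (1 + x 0 ^ 2 + x 1 ^ 2) ^ 2) *
    (if a = 0 ∧ b = 1 then 1 else if a = 1 ∧ b = 0 then -1 else 0)

/-- The area form with raised indices `ε^{AB}`. -/
def rndEUp (x : Pt) (a b : Fin 2) : ℝ :=
  ∑ c, ∑ d, rndInv x a c * rndInv x b d * rndE x c d

/-- Christoffel symbols `Γ^c_{ab}` of the round metric. -/
def Gam (c a b : Fin 2) (x : Pt) : ℝ :=
  (1/2) * ∑ d, rndInv x c d *
    (pd a (fun y => rnd y d b) x + pd b (fun y => rnd y d a) x - pd d (fun y => rnd y a b) x)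

/-- Covariant derivative `∇_a Y^b` of a vector field. -/
def cdVec (Y : Pt → Fin 2 → ℝ) (x : Pt) (a b : Fin 2) : ℝ :=
  pd a (fun y => Y y b) x + ∑ c, Gam b a c x * Y x c

/-- Covariant derivative `∇_a ω_b` of a covector field. -/
def cdCov (ω : Pt → Fin 2 → ℝ) (x : Pt) (a b : Fin 2) : ℝ :=
  pd a (fun y => ω y b) x - ∑ c, Gam c a b x * ω x c

/-- Covariant derivative `∇_a T_{bc}` of a (0,2)-tensor. -/
def cdT2 (T : Pt → Fin 2 → Fin 2 → ℝ) (x : Pt) (a b c : Fin 2) : ℝ :=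
  pd a (fun y => T y b c) x - ∑ d, Gam d a b x * T x d c - ∑ d, Gam d a c x * T x b d

/-- Covariant derivative `∇_a T_b{}^c` of a (1,1)-tensor (lower, upper). -/
def cdMix (T : Pt → Fin 2 → Fin 2 → ℝ) (x : Pt) (a b c : Fin 2) : ℝ :=
  pd a (fun y => T y b c) x - ∑ d, Gam d a b x * T x d c + ∑ d, Gam c a d x * T x b d

/-- Covariant Hessian `∇_a ∇_b f`. -/
def hess (f : Pt → ℝ) (x : Pt) (a b : Fin 2) : ℝ := cdCov (fun y c => pd c f y) x a b

/-- Laplace–Beltrami operator `Δf = σ^{ab} ∇_a∇_b f` of the round metric. -/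
def lap (f : Pt → ℝ) (x : Pt) : ℝ := ∑ a, ∑ b, rndInv x a b * hess f x a b

/-- Covariant divergence `∇_A Y^A` of a vector field. -/
def divg (Y : Pt → Fin 2 → ℝ) (x : Pt) : ℝ := ∑ a, cdVec Y x a a

/-- The area density `√(det σ)` of the round metric in stereographic coordinates. -/
def aDen (x : Pt) : ℝ := 4 / (1 + x 0 ^ 2 + x 1 ^ 2) ^ 2

/-- Smoothness of a vector field. -/
def SmoothVec (Y : Pt → Fin 2 → ℝ) : Prop := ∀ b, ContDiff ℝ (⊤ : ℕ∞) (fun x => Y x b)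

/-- The conformal Killing equation `∇^A Y^B + ∇^B Y^A = (∇_C Y^C) σ^{AB}` on a set `U`. -/
def ConformalKilling (Y : Pt → Fin 2 → ℝ) (U : Set Pt) : Prop :=
  ∀ x ∈ U, ∀ A B : Fin 2,
    (∑ c, rndInv x A c * cdVec Y x c B) + (∑ c, rndInv x B c * cdVec Y x c A)
      = divg Y x * rndInv x A B

/-- The curl `ε_{AB} ∇^A Y^B` of a vector field. -/
def curl (Y : Pt → Fin 2 → ℝ) (x : Pt) : ℝ :=
  ∑ a, ∑ b, ∑ c, rndE x a b * rndInv x a c * cdVec Y x c b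

/-- `f` is differentiable at `x` with `a`-th partial derivative `d`. -/
def HasPd (a : Fin 2) (f : Pt → ℝ) (d : ℝ) (x : Pt) : Prop :=
  DifferentiableAt ℝ f x ∧ pd a f x = d

theorem HasPd.mul {a : Fin 2} {f g : Pt → ℝ} {d e : ℝ} {x : Pt} (hf : HasPd a f d x)
    (hg : HasPd a g e x) : HasPd a (fun y => f y * g y) (f x * e + d * g x) x := by
  obtain ⟨h1, rfl⟩ := hf
  obtain ⟨h2, rfl⟩ := hg
  refine ⟨h1.mul h2, ?_⟩
  unfold pd
  rw [fderiv_fun_mul h1 h2]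
  simp
  ring

theorem HasPd.add {a : Fin 2} {f g : Pt → ℝ} {d e : ℝ} {x : Pt} (hf : HasPd a f d x)
    (hg : HasPd a g e x) : HasPd a (fun y => f y + g y) (d + e) x := by
  obtain ⟨h1, rfl⟩ := hf
  obtain ⟨h2, rfl⟩ := hg
  refine ⟨h1.add h2, ?_⟩
  unfold pd
  rw [fderiv_fun_add h1 h2]
  simp

theorem HasPd.sub {a : Fin 2} {f g : Pt → ℝ} {d e : ℝ} {x : Pt} (hf : HasPd a f d x)
    (hg : HasPd a g e x) : HasPd a (fun y => f y - g y) (d - e) x := by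
  obtain ⟨h1, rfl⟩ := hf
  obtain ⟨h2, rfl⟩ := hg
  refine ⟨h1.sub h2, ?_⟩
  unfold pd
  rw [fderiv_fun_sub h1 h2]
  simp

theorem HasPd.of (a : Fin 2) {f : Pt → ℝ} {x : Pt} (hf : ContDiffAt ℝ (⊤ : ℕ∞) f x) :
    HasPd a f (pd a f x) x :=
  ⟨hf.differentiableAt (by simp), rfl⟩

/-- `s = 1 + |x|²`. -/
def sf (x : Pt) : ℝ := 1 + x 0 ^ 2 + x 1 ^ 2

theorem sf_pos (x : Pt) : 0 < sf x := by unfold sf; positivity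

theorem hasPd_sf (a : Fin 2) (x : Pt) : HasPd a sf (2 * x a) x := by
  have h : HasFDerivAt sf ((2 * x 0) • (ContinuousLinearMap.proj 0 : Pt →L[ℝ] ℝ)
      + (2 * x 1) • (ContinuousLinearMap.proj 1 : Pt →L[ℝ] ℝ)) x := by
    have h0 : HasFDerivAt (fun y : Pt => y 0) (ContinuousLinearMap.proj 0 : Pt →L[ℝ] ℝ) x :=
      (ContinuousLinearMap.proj (R := ℝ) (φ := fun _ : Fin 2 => ℝ) 0).hasFDerivAt
    have h1 : HasFDerivAt (fun y : Pt => y 1) (ContinuousLinearMap.proj 1 : Pt →L[ℝ] ℝ) x :=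
      (ContinuousLinearMap.proj (R := ℝ) (φ := fun _ : Fin 2 => ℝ) 1).hasFDerivAt
    have := ((h0.pow 2).const_add 1).add (h1.pow 2)
    refine (this.congr_fderiv ?_)
    ext i
    simp
  refine ⟨h.differentiableAt, ?_⟩
  unfold pd
  rw [h.fderiv]
  fin_cases a <;> simp

theorem hasPd_coord (a b : Fin 2) (x : Pt) :
    HasPd a (fun y => y b) (if a = b then 1 else 0) x := by
  have h0 : HasFDerivAt (fun y : Pt => y b) (ContinuousLinearMap.proj b : Pt →L[ℝ] ℝ) x :=
    (ContinuousLinearMap.proj (R := ℝ) (φ := fun _ : Fin 2 => ℝ) b).hasFDerivAt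
  refine ⟨h0.differentiableAt, ?_⟩
  unfold pd
  rw [h0.fderiv]
  fin_cases a <;> fin_cases b <;> simp

theorem hasPd_const (a : Fin 2) (c : ℝ) (x : Pt) : HasPd a (fun _ => c) 0 x := by
  refine ⟨by fun_prop, ?_⟩
  unfold pd
  simp

theorem HasPd.congr {a : Fin 2} {f g : Pt → ℝ} {d : ℝ} {x : Pt} (hf : HasPd a f d x)
    (h : g =ᶠ[nhds x] f) : HasPd a g d x := by
  refine ⟨hf.1.congr_of_eventuallyEq h, ?_⟩
  rw [← hf.2]
  unfold pd
  rw [h.fderiv_eq]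

theorem pd_rnd (a c d : Fin 2) (x : Pt) :
    pd a (fun y => rnd y c d) x = (if c = d then 1 else 0) * (-16 * x a / sf x ^ 3) := by
  have hs := hasPd_sf a x
  have hne := (sf_pos x).ne'
  have hinv : HasPd a (fun y => (sf y)⁻¹) (-(2 * x a) / sf x ^ 2) x := by
    refine ⟨hs.1.inv hne, ?_⟩
    have := ((hasDerivAt_inv hne).comp_hasFDerivAt x hs.1.hasFDerivAt).fderiv
    change fderiv ℝ (fun y => (sf y)⁻¹) x = _ at this
    have h2 := hs.2
    unfold pd at h2 ⊢
    rw [this]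
    simp [h2]
    field_simp
  have := ((hasPd_const a (4 * (if c = d then 1 else 0)) x).mul (hinv.mul hinv)).2
  have e : (fun y => rnd y c d)
      = fun y => (4 * (if c = d then 1 else 0)) * ((sf y)⁻¹ * (sf y)⁻¹) := by
    funext y
    have := (sf_pos y).ne'
    unfold rnd
    change 4 / (sf y)^2 * _ = _
    field_simp
  rw [e, this]
  field_simp
  ring

theorem Gam_eq (c a b : Fin 2) (x : Pt) :
    Gam c a b x = -(2 / sf x) * ((if c = b then 1 else 0) * x a + (if c = a then 1 else 0) * x b
      - (if a = b then 1 else 0) * x c) := by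
  have hne := (sf_pos x).ne'
  unfold Gam
  simp only [pd_rnd, rndInv, Fin.sum_univ_two]
  change 1 / 2 * (sf x ^ 2 / 4 * _ * _ + sf x ^ 2 / 4 * _ * _) = _
  fin_cases c <;> fin_cases a <;> fin_cases b <;> simp <;> field_simp <;> ring

theorem hess00 (f : Pt → ℝ) (x : Pt) : hess f x 0 0 =
    pd 0 (pd 0 f) x + 2 / sf x * (x 0 * pd 0 f x - x 1 * pd 1 f x) := by
  unfold hess cdCov
  simp only [Gam_eq, Fin.sum_univ_two]
  simp
  change pd 0 (pd 0 f) x - _ = _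
  ring

theorem hess11 (f : Pt → ℝ) (x : Pt) : hess f x 1 1 =
    pd 1 (pd 1 f) x - 2 / sf x * (x 0 * pd 0 f x - x 1 * pd 1 f x) := by
  unfold hess cdCov
  simp only [Gam_eq, Fin.sum_univ_two]
  simp
  change 2 / sf x * _ * _ + -(2 / sf x * _ * _) = _
  ring

theorem hess01 (f : Pt → ℝ) (x : Pt) : hess f x 0 1 =
    pd 0 (pd 1 f) x + 2 / sf x * (x 1 * pd 0 f x + x 0 * pd 1 f x) := by
  unfold hess cdCov
  simp only [Gam_eq, Fin.sum_univ_two]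
  simp
  change pd 0 (pd 1 f) x - _ = _
  ring

theorem hess10 (f : Pt → ℝ) (x : Pt) : hess f x 1 0 =
    pd 1 (pd 0 f) x + 2 / sf x * (x 1 * pd 0 f x + x 0 * pd 1 f x) := by
  unfold hess cdCov
  simp only [Gam_eq, Fin.sum_univ_two]
  simp
  change pd 1 (pd 0 f) x - _ = _
  ring

theorem lap_eq (f : Pt → ℝ) (x : Pt) :
    lap f x = sf x ^ 2 / 4 * (pd 0 (pd 0 f) x + pd 1 (pd 1 f) x) := by
  unfold lap rndInv
  simp only [Fin.sum_univ_two, hess00, hess01, hess10, hess11]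
  simp
  change sf x ^ 2 / 4 * _ + sf x ^ 2 / 4 * _ = _
  ring

theorem smooth_pd (a : Fin 2) {f : Pt → ℝ} {x : Pt} (hf : ContDiffAt ℝ (⊤ : ℕ∞) f x) :
    ContDiffAt ℝ (⊤ : ℕ∞) (pd a f) x := by
  unfold pd
  exact (hf.fderiv_right (m := (⊤ : ℕ∞)) (by simp)).clm_apply contDiffAt_const

theorem pd_comm (a b : Fin 2) {f : Pt → ℝ} {x : Pt} (hf : ContDiffAt ℝ (⊤ : ℕ∞) f x) :
    pd a (pd b f) x = pd b (pd a f) x := by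
  have hs : IsSymmSndFDerivAt ℝ f x := hf.isSymmSndFDerivAt (by
    simp only [minSmoothness_of_isRCLikeNormedField]
    exact WithTop.coe_le_coe.2 le_top)
  have hd : DifferentiableAt ℝ (fderiv ℝ f) x :=
    (hf.fderiv_right (m := (⊤ : ℕ∞)) (by simp)).differentiableAt (by simp)
  have key : ∀ c d : Fin 2, pd c (pd d f) x
      = fderiv ℝ (fderiv ℝ f) x (Pi.single c 1) (Pi.single d 1) := by
    intro c d
    change fderiv ℝ (fun y => fderiv ℝ f y (Pi.single d 1)) x (Pi.single c 1) = _
    rw [fderiv_clm_apply hd (differentiableAt_const _)]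
    simp
  rw [key, key]
  exact hs _ _

theorem smooth_sf : ContDiff ℝ (⊤ : ℕ∞) sf := by unfold sf; fun_prop

/-- First flux component. -/
def tA (α : Pt → ℝ) (x : Pt) : ℝ :=
  (1/8) * (sf x * sf x) * (pd 0 (pd 0 α) x - pd 1 (pd 1 α) x)
    + (1/2) * sf x * (x 0 * pd 0 α x - x 1 * pd 1 α x)

def tB (α : Pt → ℝ) (x : Pt) : ℝ :=
  (1/4) * (sf x * sf x) * pd 0 (pd 1 α) x
    + (1/2) * sf x * (x 1 * pd 0 α x + x 0 * pd 1 α x)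

def vV (u v : Pt → ℝ) (b : Fin 2) (x : Pt) : ℝ := u x * pd b v x - v x * pd b u x

def fl0 (u v α : Pt → ℝ) (x : Pt) : ℝ := vV u v 0 x * tA α x + vV u v 1 x * tB α x
def fl1 (u v α : Pt → ℝ) (x : Pt) : ℝ := vV u v 0 x * tB α x - vV u v 1 x * tA α x

theorem div_identity (u v α : Pt → ℝ) (x : Pt) (hu : ContDiffAt ℝ (⊤ : ℕ∞) u x)
    (hv : ContDiffAt ℝ (⊤ : ℕ∞) v x) (hα' : ∀ᶠ y in nhds x, ContDiffAt ℝ (⊤ : ℕ∞) α y)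
    (he : ∀ᶠ y in nhds x, lap α y + 2 * α y = 0) :
    (∑ A, ∑ B,
        (u x * (hess v x A B - (1/2) * lap v x * rnd x A B)
          - v x * (hess u x A B - (1/2) * lap u x * rnd x A B))
        * (∑ a, ∑ b, rndInv x A a * rndInv x B b * hess α x a b)) * aDen x
      = pd 0 (fl0 u v α) x + pd 1 (fl1 u v α) x := by
  have hne := (sf_pos x).ne'
  have hα := hα'.self_of_nhds
  have hA : ∀ a, HasPd a (tA α) _ x := fun a =>
    (((hasPd_const a (1/8) x).mul ((hasPd_sf a x).mul (hasPd_sf a x))).mul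
      ((HasPd.of a (smooth_pd 0 (smooth_pd 0 hα))).sub (HasPd.of a (smooth_pd 1 (smooth_pd 1 hα))))).add
    (((hasPd_const a (1/2) x).mul (hasPd_sf a x)).mul
      (((hasPd_coord a 0 x).mul (HasPd.of a (smooth_pd 0 hα))).sub
        ((hasPd_coord a 1 x).mul (HasPd.of a (smooth_pd 1 hα)))))
  have hB : ∀ a, HasPd a (tB α) _ x := fun a =>
    (((hasPd_const a (1/4) x).mul ((hasPd_sf a x).mul (hasPd_sf a x))).mul
      (HasPd.of a (smooth_pd 0 (smooth_pd 1 hα)))).add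
    (((hasPd_const a (1/2) x).mul (hasPd_sf a x)).mul
      (((hasPd_coord a 1 x).mul (HasPd.of a (smooth_pd 0 hα))).add
        ((hasPd_coord a 0 x).mul (HasPd.of a (smooth_pd 1 hα)))))
  have hV : ∀ a b, HasPd a (vV u v b) _ x := fun a b =>
    ((HasPd.of a hu).mul (HasPd.of a (smooth_pd b hv))).sub
      ((HasPd.of a hv).mul (HasPd.of a (smooth_pd b hu)))
  have h0 : HasPd 0 (fl0 u v α) _ x := ((hV 0 0).mul (hA 0)).add ((hV 0 1).mul (hB 0))
  have h1 : HasPd 1 (fl1 u v α) _ x := ((hV 1 0).mul (hB 1)).sub ((hV 1 1).mul (hA 1))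
  have hE : ∀ a, HasPd a (fun y => (1/4) * (sf y * sf y) * (pd 0 (pd 0 α) y + pd 1 (pd 1 α) y)
      + 2 * α y) _ x := fun a =>
    (((hasPd_const a (1/4) x).mul ((hasPd_sf a x).mul (hasPd_sf a x))).mul
      ((HasPd.of a (smooth_pd 0 (smooth_pd 0 hα))).add (HasPd.of a (smooth_pd 1 (smooth_pd 1 hα))))).add
    ((hasPd_const a 2 x).mul (HasPd.of a hα))
  have hz : ∀ a, HasPd a (fun y => (1/4) * (sf y * sf y) * (pd 0 (pd 0 α) y + pd 1 (pd 1 α) y)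
      + 2 * α y) 0 x := fun a => by
    refine (hasPd_const a 0 x).congr ?_
    filter_upwards [he] with y hy
    rw [lap_eq] at hy
    linarith
  have e0 := (hE 0).2.symm.trans (hz 0).2
  have e1 := (hE 1).2.symm.trans (hz 1).2
  have ee := he.self_of_nhds
  rw [lap_eq] at ee
  rw [h0.2, h1.2]
  have c1 := pd_comm 1 0 hα
  have c2 := pd_comm 1 0 hu
  have c3 := pd_comm 1 0 hv
  have d0 : pd 1 (pd 0 (pd 1 α)) x = pd 0 (pd 1 (pd 1 α)) x := pd_comm 1 0 (smooth_pd 1 hα)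
  have d1 : pd 0 (pd 0 (pd 1 α)) x = pd 1 (pd 0 (pd 0 α)) x := by
    rw [pd_comm 1 0 (smooth_pd 0 hα)]
    have hev : pd 0 (pd 1 α) =ᶠ[nhds x] pd 1 (pd 0 α) := by
      filter_upwards [hα'] with y hy using pd_comm 0 1 hy
    change fderiv ℝ _ x _ = fderiv ℝ _ x _
    rw [hev.fderiv_eq]
  have hsf : sf x = 1 + x 0 ^ 2 + x 1 ^ 2 := rfl
  unfold rnd rndInv aDen
  rw [← hsf]
  simp only [Fin.sum_univ_two, lap_eq, hess00, hess01, hess10, hess11, c1, c2, c3]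
  simp at e0 e1 ⊢
  simp only [d0, d1, vV, tA, tB]
  trans (2 * (sf x * (u x * (pd 0 (pd 0 v) x - pd 1 (pd 1 v) x) / 2
        - v x * (pd 0 (pd 0 u) x - pd 1 (pd 1 u) x) / 2)
        + 2 * (x 0 * vV u v 0 x - x 1 * vV u v 1 x))
      * ((1/8) * sf x * (pd 0 (pd 0 α) x - pd 1 (pd 1 α) x)
        + (1/2) * (x 0 * pd 0 α x - x 1 * pd 1 α x))
    + 2 * (sf x * (u x * pd 0 (pd 1 v) x - v x * pd 0 (pd 1 u) x)
        + 2 * (x 1 * vV u v 0 x + x 0 * vV u v 1 x))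
      * ((1/4) * sf x * pd 0 (pd 1 α) x
        + (1/2) * (x 1 * pd 0 α x + x 0 * pd 1 α x)))
  · unfold vV
    field_simp
    ring
  · unfold vV
    generalize sf x = s at *
    subst hsf
    linear_combination (-1/2) * (u x * pd 0 v x - v x * pd 0 u x) * e0
      + (-1/2) * (u x * pd 1 v x - v x * pd 1 u x) * e1

theorem integral_pd_zero (a : Fin 2) {f : Pt → ℝ} (hf : ContDiff ℝ (⊤ : ℕ∞) f)
    (hc : HasCompactSupport f) : Integrable (pd a f) ∧ ∫ x, pd a f x = 0 := by
  have hcont : Continuous (pd a f) :=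
    (contDiff_iff_contDiffAt.2 fun x => smooth_pd a hf.contDiffAt : ContDiff ℝ (⊤ : ℕ∞) _).continuous
  have hi : Integrable (pd a f) :=
    hcont.integrable_of_hasCompactSupport (hc.fderiv_apply (𝕜 := ℝ) _)
  refine ⟨hi, ?_⟩
  have := integral_mul_fderiv_eq_neg_fderiv_mul_of_integrable (μ := (volume : Measure Pt))
    (f := fun _ : Pt => (1 : ℝ)) (g := f) (v := Pi.single a 1) (by simp)
    (by simp only [one_mul]; exact hi) (by simpa using hf.continuous.integrable_of_hasCompactSupport hc)
    (fun x _ => by fun_prop) (fun x _ => hf.contDiffAt.differentiableAt (by simp))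
  simp only [one_mul] at this
  exact this.trans (by simp)

/-- if `u, v` are smooth on `S²`, `v` is compactly supported in an open
set `U`, and `α` is smooth on `U` with `(Δ+2)α = 0` on `U`, then
`∫_U [u(∇_A∇_B v - ½(Δv)σ_{AB}) - v(∇_A∇_B u - ½(Δu)σ_{AB})] ∇^A∇^B α = 0`
(integration with respect to the round area measure). -/
theorem symmetric_traceless_hessian_pairing_vanishes
    (U : Set Pt) (hU : IsOpen U)
    (u v : Pt → ℝ) (hu : ContDiff ℝ (⊤ : ℕ∞) u) (hv : ContDiff ℝ (⊤ : ℕ∞) v)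
    (hvsupp : HasCompactSupport v) (hvU : tsupport v ⊆ U)
    (α : Pt → ℝ) (hα : ContDiffOn ℝ (⊤ : ℕ∞) α U)
    (hαeig : ∀ x ∈ U, lap α x + 2 * α x = 0) :
    (∫ x in U,
      (∑ A, ∑ B,
        (u x * (hess v x A B - (1/2) * lap v x * rnd x A B)
          - v x * (hess u x A B - (1/2) * lap u x * rnd x A B))
        * (∑ a, ∑ b, rndInv x A a * rndInv x B b * hess α x a b)) * aDen x) = 0 := by
  have hnz : ∀ x, x ∉ tsupport v → v =ᶠ[nhds x] fun _ => 0 := fun x hx =>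
    notMem_tsupport_iff_eventuallyEq.1 hx
  have hpz : ∀ b x, x ∉ tsupport v → pd b v =ᶠ[nhds x] fun _ => 0 := by
    intro b x hx
    filter_upwards [(hnz x hx).eventuallyEq_nhds] with y hy
    exact ((hasPd_const b 0 y).congr hy).2
  have hαat : ∀ x ∈ U, ContDiffAt ℝ (⊤ : ℕ∞) α x := fun x hx => hα.contDiffAt (hU.mem_nhds hx)
  have hVz : ∀ b x, x ∉ tsupport v → vV u v b =ᶠ[nhds x] fun _ => 0 := by
    intro b x hx
    filter_upwards [hnz x hx, hpz b x hx] with y h1 h2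
    simp [vV, h1, h2]
  have hz0 : ∀ x, x ∉ tsupport v → fl0 u v α =ᶠ[nhds x] fun _ => 0 := by
    intro x hx
    filter_upwards [hVz 0 x hx, hVz 1 x hx] with y h1 h2
    simp [fl0, h1, h2]
  have hz1 : ∀ x, x ∉ tsupport v → fl1 u v α =ᶠ[nhds x] fun _ => 0 := by
    intro x hx
    filter_upwards [hVz 0 x hx, hVz 1 x hx] with y h1 h2
    simp [fl1, h1, h2]
  have hVs : ∀ b x, ContDiffAt ℝ (⊤ : ℕ∞) (vV u v b) x := fun b x =>
    (hu.contDiffAt.mul (smooth_pd b hv.contDiffAt)).sub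
      (hv.contDiffAt.mul (smooth_pd b hu.contDiffAt))
  have hAs : ∀ x ∈ U, ContDiffAt ℝ (⊤ : ℕ∞) (tA α) x := by
    intro x hx
    have h := hαat x hx
    have h0 := smooth_pd 0 h
    have h1 := smooth_pd 1 h
    have h00 := smooth_pd 0 h0
    have h11 := smooth_pd 1 h1
    have hs := smooth_sf.contDiffAt (x := x)
    unfold tA
    fun_prop
  have hBs : ∀ x ∈ U, ContDiffAt ℝ (⊤ : ℕ∞) (tB α) x := by
    intro x hx
    have h := hαat x hx
    have h0 := smooth_pd 0 h
    have h1 := smooth_pd 1 h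
    have h01 := smooth_pd 0 h1
    have hs := smooth_sf.contDiffAt (x := x)
    unfold tB
    fun_prop
  have hs0 : ContDiff ℝ (⊤ : ℕ∞) (fl0 u v α) := by
    rw [contDiff_iff_contDiffAt]
    intro x
    by_cases hx : x ∈ tsupport v
    · exact ((hVs 0 x).mul (hAs x (hvU hx))).add ((hVs 1 x).mul (hBs x (hvU hx)))
    · exact contDiffAt_const.congr_of_eventuallyEq (hz0 x hx)
  have hs1 : ContDiff ℝ (⊤ : ℕ∞) (fl1 u v α) := by
    rw [contDiff_iff_contDiffAt]
    intro x
    by_cases hx : x ∈ tsupport v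
    · exact ((hVs 0 x).mul (hBs x (hvU hx))).sub ((hVs 1 x).mul (hAs x (hvU hx)))
    · exact contDiffAt_const.congr_of_eventuallyEq (hz1 x hx)
  have hc0 : HasCompactSupport (fl0 u v α) :=
    HasCompactSupport.intro hvsupp fun x hx => (hz0 x hx).self_of_nhds
  have hc1 : HasCompactSupport (fl1 u v α) :=
    HasCompactSupport.intro hvsupp fun x hx => (hz1 x hx).self_of_nhds
  obtain ⟨i0, I0⟩ := integral_pd_zero 0 hs0 hc0
  obtain ⟨i1, I1⟩ := integral_pd_zero 1 hs1 hc1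
  have hG : ∀ x, (∑ A, ∑ B,
        (u x * (hess v x A B - (1/2) * lap v x * rnd x A B)
          - v x * (hess u x A B - (1/2) * lap u x * rnd x A B))
        * (∑ a, ∑ b, rndInv x A a * rndInv x B b * hess α x a b)) * aDen x
      = pd 0 (fl0 u v α) x + pd 1 (fl1 u v α) x := by
    intro x
    by_cases hx : x ∈ tsupport v
    · have hxU := hU.mem_nhds (hvU hx)
      exact div_identity u v α x hu.contDiffAt hv.contDiffAt
        (Filter.mem_of_superset hxU hαat) (Filter.mem_of_superset hxU hαeig)
    · rw [((hasPd_const 0 0 x).congr (hz0 x hx)).2, ((hasPd_const 1 0 x).congr (hz1 x hx)).2]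
      have q : ∀ a b, pd a (pd b v) x = 0 := fun a b =>
        ((hasPd_const a 0 x).congr (hpz b x hx)).2
      have q1 : ∀ b, pd b v x = 0 := fun b => (hpz b x hx).self_of_nhds
      have q0 : v x = 0 := (hnz x hx).self_of_nhds
      simp only [Fin.sum_univ_two, lap_eq, hess00, hess01, hess10, hess11, q, q1, q0]
      ring
  rw [setIntegral_eq_integral_of_forall_compl_eq_zero]
  · simp only [hG]
    rw [integral_add i0 i1, I0, I1, add_zero]
  · intro x hx
    have hx' : x ∉ tsupport v := fun h => hx (hvU h)
    rw [hG, ((hasPd_const 0 0 x).congr (hz0 x hx')).2,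
      ((hasPd_const 1 0 x).congr (hz1 x hx')).2, add_zero]
end
end

section
/- Let Y^A be a conformal Killing field on an open set U ⊂ S^2, f a smooth function compactly supported in U, C_{AB} a smooth symmetric traceless 2-tensor on S^2, F_{AB} = 2∇_A∇_B f - (Δf)σ_{AB}, and P_{BA} = ∇_B∇^E C_{EA} - ∇_A∇^E C_{EB}. Then (1/4)∫_U Y^A [C_{AB}∇_D F^{BD} + F_{AB}∇_D C^{BD} + (1/2)∇_A(C_{BD}F^{BD}) - f∇^B P_{BA} - 3P_{BA}∇^B f] = -(1/4)∫_U f ∇^A∇^B(∇_C Y^C) C_{AB}. -/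
open MeasureTheory Real
noncomputable section

/-- `F_{AB} = 2∇_A∇_B f - (Δf) σ_{AB}`. -/
def Ften (f : Pt → ℝ) (x : Pt) (A B : Fin 2) : ℝ :=
  2 * hess f x A B - lap f x * rnd x A B

/-- `∇^E C_{EA}` (a covector field). -/
def divC (C : Pt → Fin 2 → Fin 2 → ℝ) (x : Pt) (A : Fin 2) : ℝ :=
  ∑ e, ∑ c, rndInv x e c * cdT2 C x c e A

/-- `P_{BA} = ∇_B ∇^E C_{EA} - ∇_A ∇^E C_{EB}`. -/
def Pten (C : Pt → Fin 2 → Fin 2 → ℝ) (x : Pt) (B A : Fin 2) : ℝ :=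
  cdCov (divC C) x B A - cdCov (divC C) x A B

/-- `∇_D T^{BD}` for a symmetric (0,2)-tensor `T`, as a vector field. -/
def divUpT (T : Pt → Fin 2 → Fin 2 → ℝ) (x : Pt) (B : Fin 2) : ℝ :=
  ∑ d, ∑ e, ∑ c, rndInv x B e * rndInv x d c * cdT2 T x d e c


set_option linter.unusedSimpArgs false
set_option linter.unreachableTactic false
set_option linter.unusedTactic false

/-! ## The ring of smooth functions on the chart -/

/-- Smooth functions on the chart. -/
def Sm : Subalgebra ℝ (Pt → ℝ) where
  carrier := {g | ContDiff ℝ (⊤ : ℕ∞) g}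
  mul_mem' := fun {a b} ha hb => by
    simp only [Set.mem_ofPred_eq] at *
    exact ContDiff.mul ha hb
  add_mem' := fun {a b} ha hb => by
    simp only [Set.mem_ofPred_eq] at *
    exact ContDiff.add ha hb
  algebraMap_mem' := fun r => by
    simp only [Set.mem_ofPred_eq]
    exact contDiff_const

/-- Value of a smooth function at a point. -/
def ev (g : Sm) (x : Pt) : ℝ := (g : Pt → ℝ) x

lemma ev_smooth (g : Sm) : ContDiff ℝ (⊤ : ℕ∞) (fun x => ev g x) := g.2

lemma ev_diff (g : Sm) (x : Pt) : DifferentiableAt ℝ (fun x => ev g x) x :=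
  ((ev_smooth g).differentiable (by simp)) x

lemma sm_ext {g h : Sm} (e : ∀ x, ev g x = ev h x) : g = h := Subtype.ext (funext e)

lemma ev_add (g h : Sm) (x) : ev (g + h) x = ev g x + ev h x := rfl
lemma ev_mul (g h : Sm) (x) : ev (g * h) x = ev g x * ev h x := rfl
lemma ev_neg (g : Sm) (x) : ev (-g) x = - ev g x := rfl
lemma ev_sub (g h : Sm) (x) : ev (g - h) x = ev g x - ev h x := rfl
lemma ev_zero (x) : ev 0 x = 0 := rfl
lemma ev_one (x) : ev 1 x = 1 := rfl
lemma ev_pow (g : Sm) (n : ℕ) (x) : ev (g ^ n) x = ev g x ^ n := rfl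

lemma pd_smooth (a : Fin 2) {g : Pt → ℝ} (hg : ContDiff ℝ (⊤ : ℕ∞) g) :
    ContDiff ℝ (⊤ : ℕ∞) (pd a g) := by
  have h : ContDiff ℝ (⊤ : ℕ∞) (fderiv ℝ g) := hg.fderiv_right (by norm_cast)
  exact h.clm_apply contDiff_const

/-- Partial derivative on smooth functions. -/
def D (a : Fin 2) (g : Sm) : Sm := ⟨pd a g, pd_smooth a g.2⟩

/-- Constants. -/
def kk (r : ℝ) : Sm := algebraMap ℝ Sm r

lemma ev_kk (r : ℝ) (x) : ev (kk r) x = r := rfl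

lemma pd_ev (a : Fin 2) (g : Sm) (x) : pd a (fun y => ev g y) x = ev (D a g) x := rfl

lemma D_add (a) (g h : Sm) : D a (g + h) = D a g + D a h := by
  apply sm_ext; intro x
  change fderiv ℝ (fun y => ev g y + ev h y) x _ = fderiv ℝ (fun y => ev g y) x _ +
    fderiv ℝ (fun y => ev h y) x _
  rw [fderiv_fun_add (ev_diff g x) (ev_diff h x)]; rfl

lemma D_mul (a) (g h : Sm) : D a (g * h) = D a g * h + g * D a h := by
  apply sm_ext; intro x
  change fderiv ℝ (fun y => ev g y * ev h y) x _ = fderiv ℝ (fun y => ev g y) x _ * ev h x +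
    ev g x * fderiv ℝ (fun y => ev h y) x _
  rw [fderiv_fun_mul (ev_diff g x) (ev_diff h x)]
  simp; ring

lemma D_kk (a) (r : ℝ) : D a (kk r) = 0 := by
  apply sm_ext; intro x
  change fderiv ℝ (fun y => r) x _ = 0
  simp

lemma D_neg (a) (g : Sm) : D a (-g) = - D a g := by
  have h : -g = kk (-1) * g := by apply sm_ext; intro x; simp [ev_neg, ev_mul, ev_kk]
  rw [h, D_mul, D_kk]; apply sm_ext; intro x; simp [ev_neg, ev_mul, ev_kk, ev_add, ev_zero]

lemma D_sub (a) (g h : Sm) : D a (g - h) = D a g - D a h := by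
  rw [sub_eq_add_neg, D_add, D_neg, ← sub_eq_add_neg]

lemma D_zero (a) : D a 0 = 0 := by
  have := D_sub a 0 0; simpa using this

lemma D_one (a) : D a 1 = 0 := D_kk a 1

lemma D_comm (g : Sm) : D 1 (D 0 g) = D 0 (D 1 g) := by
  apply sm_ext; intro x
  have hg : ContDiff ℝ (⊤ : ℕ∞) (g : Pt → ℝ) := g.2
  have h1 : DifferentiableAt ℝ (fderiv ℝ (g : Pt → ℝ)) x :=
    ((hg.fderiv_right (m := (⊤ : ℕ∞)) (by norm_cast)).differentiable (by simp)) x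
  have key : ∀ a b : Fin 2, ev (D a (D b g)) x =
      fderiv ℝ (fderiv ℝ (g : Pt → ℝ)) x (Pi.single a 1) (Pi.single b 1) := by
    intro a b
    change fderiv ℝ (fun y => fderiv ℝ (g : Pt → ℝ) y (Pi.single b 1)) x (Pi.single a 1) = _
    rw [fderiv_clm_apply h1 (differentiableAt_const _)]
    simp
  rw [key, key]
  have hs : IsSymmSndFDerivAt ℝ (g : Pt → ℝ) x :=
    (hg.contDiffAt).isSymmSndFDerivAt (by simp; norm_cast)
  exact hs _ _

/-- Coordinate functions. -/
def X0 : Sm := ⟨fun x : Pt => x 0, (contDiff_apply ℝ ℝ (0 : Fin 2) : ContDiff ℝ (⊤ : ℕ∞) (fun x : Pt => x 0))⟩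
def X1 : Sm := ⟨fun x : Pt => x 1, (contDiff_apply ℝ ℝ (1 : Fin 2) : ContDiff ℝ (⊤ : ℕ∞) (fun x : Pt => x 1))⟩

lemma ev_X0 (x) : ev X0 x = x 0 := rfl
lemma ev_X1 (x) : ev X1 x = x 1 := rfl

lemma pd_coord (a i : Fin 2) (x : Pt) : pd a (fun y => y i) x = (Pi.single a 1 : Pt) i := by
  unfold pd
  have : HasFDerivAt (fun y : Pt => y i) (ContinuousLinearMap.proj (R := ℝ) (φ := fun _ : Fin 2 => ℝ) i) x :=
    hasFDerivAt_apply i x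
  rw [this.fderiv]; rfl

lemma D0_X0 : D 0 X0 = 1 := by
  apply sm_ext; intro x
  change pd 0 (fun y => y 0) x = 1
  rw [pd_coord]; simp
lemma D1_X0 : D 1 X0 = 0 := by
  apply sm_ext; intro x
  change pd 1 (fun y => y 0) x = 0
  rw [pd_coord]; simp
lemma D0_X1 : D 0 X1 = 0 := by
  apply sm_ext; intro x
  change pd 0 (fun y => y 1) x = 0
  rw [pd_coord]; simp
lemma D1_X1 : D 1 X1 = 1 := by
  apply sm_ext; intro x
  change pd 1 (fun y => y 1) x = 1
  rw [pd_coord]; simp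

def sS : Sm := 1 + X0 * X0 + X1 * X1

lemma ev_sS (x) : ev sS x = 1 + x 0 ^ 2 + x 1 ^ 2 := by
  simp [sS, ev_add, ev_mul, ev_one, ev_X0, ev_X1]; ring

lemma sS_pos (x) : 0 < ev sS x := by rw [ev_sS]; positivity

/-- The inverse of `1 + |x|²`. -/
def tS : Sm := ⟨fun x => (ev sS x)⁻¹, by
  simp only [Sm]; exact (ev_smooth sS).inv (fun x => (sS_pos x).ne')⟩

lemma ev_tS (x) : ev tS x = (ev sS x)⁻¹ := rfl

lemma tS_mul : tS * sS = 1 := by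
  apply sm_ext; intro x
  rw [ev_mul, ev_tS, ev_one, inv_mul_cancel₀ (sS_pos x).ne']

lemma D0_sS : D 0 sS = kk 2 * X0 := by
  simp only [sS, D_add, D_mul, D_one, D0_X0, D0_X1]
  apply sm_ext; intro x; simp [ev_add, ev_mul, ev_one, ev_X0, ev_X1, ev_zero, ev_kk]; ring
lemma D1_sS : D 1 sS = kk 2 * X1 := by
  simp only [sS, D_add, D_mul, D_one, D1_X0, D1_X1]
  apply sm_ext; intro x; simp [ev_add, ev_mul, ev_one, ev_X0, ev_X1, ev_zero, ev_kk]; ring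

lemma D_tS (a) : D a tS = - (tS * tS * D a sS) := by
  have h := congrArg (D a) tS_mul
  rw [D_mul, D_one] at h
  linear_combination tS * h - D a tS * tS_mul

lemma D0_tS : D 0 tS = - (tS * tS * (kk 2 * X0)) := by rw [D_tS, D0_sS]
lemma D1_tS : D 1 tS = - (tS * tS * (kk 2 * X1)) := by rw [D_tS, D1_sS]

/-- Area density. -/
def ph : Sm := kk 4 * (tS * tS)
/-- Inverse of the area density. -/
def lm : Sm := kk (1/4) * (sS * sS)

lemma ph_lm : ph * lm = 1 := by
  have h : kk 4 * kk (1/4) = 1 := by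
    apply sm_ext; intro x; simp [ev_mul, ev_kk, ev_one]
  unfold ph lm
  linear_combination (tS * sS * tS * sS) * h + (tS * sS + 1) * tS_mul

lemma ph_lm_ev (x) : ev ph x * ev lm x = 1 := by rw [← ev_mul, ph_lm, ev_one]

def w0 : Sm := - (kk 2 * (X0 * tS))
def w1 : Sm := - (kk 2 * (X1 * tS))

lemma D0_ph : D 0 ph = kk 2 * (w0 * ph) := by
  simp only [ph, D_mul, D_kk, D0_tS, w0]; apply sm_ext; intro x
  simp only [ev_add, ev_mul, ev_neg, ev_zero, ev_kk]; ring
lemma D1_ph : D 1 ph = kk 2 * (w1 * ph) := by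
  simp only [ph, D_mul, D_kk, D1_tS, w1]; apply sm_ext; intro x
  simp only [ev_add, ev_mul, ev_neg, ev_zero, ev_kk]; ring
lemma D0_lm : D 0 lm = X0 * sS := by
  simp only [lm, D_mul, D_kk, D0_sS]; apply sm_ext; intro x
  simp only [ev_add, ev_mul, ev_neg, ev_zero, ev_kk]; ring
lemma D1_lm : D 1 lm = X1 * sS := by
  simp only [lm, D_mul, D_kk, D1_sS]; apply sm_ext; intro x
  simp only [ev_add, ev_mul, ev_neg, ev_zero, ev_kk]; ring

lemma ev_ph (x) : ev ph x = 4 / (1 + x 0 ^ 2 + x 1 ^ 2) ^ 2 := by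
  simp only [ph, ev_mul, ev_kk, ev_tS, ev_sS]; field_simp
lemma ev_lm (x) : ev lm x = (1 + x 0 ^ 2 + x 1 ^ 2) ^ 2 / 4 := by
  simp only [lm, ev_mul, ev_kk, ev_sS]; ring

lemma rnd_eq (x : Pt) (a b : Fin 2) : rnd x a b = ev ph x * (if a = b then 1 else 0) := by
  rw [rnd, ev_ph]
lemma rndInv_eq (x : Pt) (a b : Fin 2) : rndInv x a b = ev lm x * (if a = b then 1 else 0) := by
  rw [rndInv, ev_lm]
lemma aDen_eq (x : Pt) : aDen x = ev ph x := by rw [aDen, ev_ph]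

lemma pd_const (a : Fin 2) (r : ℝ) (x) : pd a (fun _ => r) x = 0 := by simp [pd]
lemma pd_neg_ev (a : Fin 2) (g : Sm) (x) : pd a (fun y => - ev g y) x = - ev (D a g) x := by
  rw [← ev_neg, ← D_neg]; rfl

/-- Christoffel symbols -/
lemma Gam_vals (x : Pt) : Gam 0 0 0 x = ev w0 x ∧ Gam 0 0 1 x = ev w1 x ∧ Gam 0 1 0 x = ev w1 x ∧
    Gam 0 1 1 x = - ev w0 x ∧ Gam 1 0 0 x = - ev w1 x ∧ Gam 1 0 1 x = ev w0 x ∧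
    Gam 1 1 0 x = ev w0 x ∧ Gam 1 1 1 x = ev w1 x := by
  have h := ph_lm_ev x
  refine ⟨?_, ?_, ?_, ?_, ?_, ?_, ?_, ?_⟩ <;>
  · simp [Gam, rnd_eq, rndInv_eq, Fin.sum_univ_two, pd_const, pd_ev, D0_ph, D1_ph, ev_mul, ev_kk]
    first
      | linear_combination ev w0 x * h
      | linear_combination ev w1 x * h
      | linear_combination -ev w0 x * h
      | linear_combination -ev w1 x * h

/-- A symmetric traceless tensor from its two components. -/
def Tm (a b : Sm) (x : Pt) (A B : Fin 2) : ℝ :=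
  if A = 0 then (if B = 0 then ev a x else ev b x) else (if B = 0 then ev b x else - ev a x)

/-- A covector from its two components. -/
def Vm (a b : Sm) (x : Pt) (A : Fin 2) : ℝ := if A = 0 then ev a x else ev b x

/-- An antisymmetric tensor. -/
def Am (a : Sm) (x : Pt) (A B : Fin 2) : ℝ :=
  if A = 0 then (if B = 0 then 0 else ev a x) else (if B = 0 then - ev a x else 0)

lemma divUpT_Tm (a b : Sm) (x : Pt) :
    divUpT (Tm a b) x 0 = ev lm x ^ 2 * (ev (D 0 a) x + ev (D 1 b) x) ∧
    divUpT (Tm a b) x 1 = ev lm x ^ 2 * (ev (D 0 b) x - ev (D 1 a) x) := by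
  obtain ⟨h1, h2, h3, h4, h5, h6, h7, h8⟩ := Gam_vals x
  constructor <;>
  · simp [divUpT, cdT2, Tm, rndInv_eq, Fin.sum_univ_two, pd_ev, pd_neg_ev, h1, h2, h3, h4, h5, h6, h7, h8]
    ring

lemma divC_Tm (u v : Sm) :
    divC (Tm u v) = Vm (lm * (D 0 u + D 1 v)) (lm * (D 0 v - D 1 u)) := by
  funext x A
  obtain ⟨h1, h2, h3, h4, h5, h6, h7, h8⟩ := Gam_vals x
  fin_cases A <;>
  · simp [divC, cdT2, Tm, Vm, rndInv_eq, Fin.sum_univ_two, pd_ev, pd_neg_ev, h1, h2, h3, h4, h5, h6, h7, h8, ev_mul, ev_add, ev_sub]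
    ring

/-- `P_{01}` -/
def pS (u v : Sm) : Sm := D 0 (lm * (D 0 v - D 1 u)) - D 1 (lm * (D 0 u + D 1 v))

lemma Pten_Tm (u v : Sm) : (fun y => Pten (Tm u v) y) = Am (pS u v) := by
  funext x A B
  obtain ⟨h1, h2, h3, h4, h5, h6, h7, h8⟩ := Gam_vals x
  fin_cases A <;> fin_cases B <;>
  · simp [Pten, divC_Tm, cdCov, Vm, Am, pS, Fin.sum_univ_two, pd_ev, h1, h2, h3, h4, h5, h6, h7, h8, ev_sub]

lemma divP (p : Sm) (x : Pt) :
    (∑ b, ∑ c, rndInv x b c * cdT2 (Am p) x c b 0) = - ev (D 1 (lm * p)) x * ev ph x * ev lm x ∧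
    (∑ b, ∑ c, rndInv x b c * cdT2 (Am p) x c b 1) = ev (D 0 (lm * p)) x * ev ph x * ev lm x := by
  obtain ⟨h1, h2, h3, h4, h5, h6, h7, h8⟩ := Gam_vals x
  have e0 : ev (D 0 lm) x = - 2 * ev w0 x * ev lm x := by
    rw [D0_lm]; simp only [w0, lm, ev_mul, ev_neg, ev_kk, ev_tS]
    have := (sS_pos x).ne'
    field_simp; ring
  have e1 : ev (D 1 lm) x = - 2 * ev w1 x * ev lm x := by
    rw [D1_lm]; simp only [w1, lm, ev_mul, ev_neg, ev_kk, ev_tS]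
    have := (sS_pos x).ne'
    field_simp; ring
  have h := ph_lm_ev x
  constructor
  · simp [cdT2, Am, rndInv_eq, Fin.sum_univ_two, pd_ev, pd_neg_ev, pd_const, h1, h2, h3, h4, h5, h6, h7, h8, ev_mul, ev_add, D_mul, e1]
    linear_combination (- 2 * ev w1 x * ev lm x * ev p x + ev lm x * ev (D 1 p) x) * h
  · simp [cdT2, Am, rndInv_eq, Fin.sum_univ_two, pd_ev, pd_neg_ev, pd_const, h1, h2, h3, h4, h5, h6, h7, h8, ev_mul, ev_add, D_mul, e0]
    linear_combination -(- 2 * ev w0 x * ev lm x * ev p x + ev lm x * ev (D 0 p) x) * h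

def aS (f : Sm) : Sm := D 0 (D 0 f) - D 1 (D 1 f) - kk 2 * (w0 * D 0 f) + kk 2 * (w1 * D 1 f)
def bS (f : Sm) : Sm := kk 2 * (D 0 (D 1 f) - w1 * D 0 f - w0 * D 1 f)

lemma hess_vals (f : Sm) (x : Pt) :
    hess (fun y => ev f y) x 0 0 = ev (D 0 (D 0 f) - w0 * D 0 f + w1 * D 1 f) x ∧
    hess (fun y => ev f y) x 0 1 = ev (D 0 (D 1 f) - w1 * D 0 f - w0 * D 1 f) x ∧
    hess (fun y => ev f y) x 1 0 = ev (D 0 (D 1 f) - w1 * D 0 f - w0 * D 1 f) x ∧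
    hess (fun y => ev f y) x 1 1 = ev (D 1 (D 1 f) + w0 * D 0 f - w1 * D 1 f) x := by
  obtain ⟨h1, h2, h3, h4, h5, h6, h7, h8⟩ := Gam_vals x
  refine ⟨?_, ?_, ?_, ?_⟩ <;>
  · simp [hess, cdCov, Fin.sum_univ_two, pd_ev, h1, h2, h3, h4, h5, h6, h7, h8, ev_mul, ev_add, ev_sub, D_comm]
    try ring

lemma Ften_eq (f : Sm) : Ften (fun y => ev f y) = Tm (aS f) (bS f) := by
  funext x A B
  obtain ⟨h1, h2, h3, h4⟩ := hess_vals f x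
  have h := ph_lm_ev x
  fin_cases A <;> fin_cases B
  · simp [Ften, lap, Tm, aS, Fin.sum_univ_two, rnd_eq, rndInv_eq, h1, h2, h3, h4, ev_mul, ev_add, ev_sub, ev_kk]
    linear_combination -(ev (D 0 (D 0 f)) x + ev (D 1 (D 1 f)) x) * h
  · simp [Ften, lap, Tm, bS, Fin.sum_univ_two, rnd_eq, rndInv_eq, h1, h2, h3, h4, ev_mul, ev_add, ev_sub, ev_kk]
  · simp [Ften, lap, Tm, bS, Fin.sum_univ_two, rnd_eq, rndInv_eq, h1, h2, h3, h4, ev_mul, ev_add, ev_sub, ev_kk]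
  · simp [Ften, lap, Tm, aS, Fin.sum_univ_two, rnd_eq, rndInv_eq, h1, h2, h3, h4, ev_mul, ev_add, ev_sub, ev_kk]
    linear_combination -(ev (D 0 (D 0 f)) x + ev (D 1 (D 1 f)) x) * h

/-- divergence of `Y` -/
def psS (Y0 Y1 : Sm) : Sm := D 0 Y0 + D 1 Y1 + kk 2 * (w0 * Y0) + kk 2 * (w1 * Y1)

lemma divg_eq (Y0 Y1 : Sm) : (fun y => divg (Vm Y0 Y1) y) = fun y => ev (psS Y0 Y1) y := by
  funext x
  obtain ⟨h1, h2, h3, h4, h5, h6, h7, h8⟩ := Gam_vals x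
  simp [divg, cdVec, Vm, psS, Fin.sum_univ_two, pd_ev, h1, h2, h3, h4, h5, h6, h7, h8, ev_mul, ev_add, ev_kk]
  ring

lemma CKE_eq (Y0 Y1 : Sm) (U : Set Pt) (h : ConformalKilling (Vm Y0 Y1) U) (x : Pt) (hx : x ∈ U) :
    ev (D 0 Y0 - D 1 Y1) x = 0 ∧ ev (D 0 Y1 + D 1 Y0) x = 0 := by
  obtain ⟨h1, h2, h3, h4, h5, h6, h7, h8⟩ := Gam_vals x
  have a := h x hx 0 0
  have b := h x hx 0 1
  have hp := ph_lm_ev x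
  simp [divg, cdVec, Vm, rndInv_eq, Fin.sum_univ_two, pd_ev, h1, h2, h3, h4, h5, h6, h7, h8] at a b
  constructor
  · rw [ev_sub]
    linear_combination ev ph x * a - (ev (D 0 Y0) x - ev (D 1 Y1) x) * hp
  · rw [ev_add]
    linear_combination ev ph x * b - (ev (D 0 Y1) x + ev (D 1 Y0) x) * hp

/-! ## The integrands as smooth functions and the potential -/

def NS (a b u v : Sm) : Sm := lm * lm * (u * a + v * b)

/-- left integrand, in terms of the components `a, b` of `F` and `p` of `P`. -/
def lS (f a b u v p Y0 Y1 : Sm) : Sm :=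
  ph * (Y0 * (lm * lm * (u * (D 0 a + D 1 b) + v * (D 0 b - D 1 a))
        + lm * lm * (a * (D 0 u + D 1 v) + b * (D 0 v - D 1 u))
        + D 0 (NS a b u v) + f * D 1 (lm * p) + kk 3 * (lm * p * D 1 f))
      + Y1 * (lm * lm * (v * (D 0 a + D 1 b) - u * (D 0 b - D 1 a))
        + lm * lm * (b * (D 0 u + D 1 v) - a * (D 0 v - D 1 u))
        + D 1 (NS a b u v) - f * D 0 (lm * p) - kk 3 * (lm * p * D 0 f)))

/-- contraction of the traceless Hessian of `g` with `C`. -/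
def hS (g u v : Sm) : Sm :=
  u * (D 0 (D 0 g) - D 1 (D 1 g) - kk 2 * (w0 * D 0 g) + kk 2 * (w1 * D 1 g))
    + kk 2 * (v * (D 0 (D 1 g) - w1 * D 0 g - w0 * D 1 g))

/-- right integrand. -/
def rS (f g u v : Sm) : Sm := f * (lm * hS g u v)

def K1 (u v Y0 Y1 : Sm) : Sm :=
  v * (D 1 lm * Y0 - D 0 lm * Y1) + lm * (kk 2 * (Y0 * D 1 v) - kk 2 * (Y1 * D 0 v)
    + v * (D 1 Y0 - D 0 Y1) - kk 2 * (u * (D 0 Y0 + D 1 Y1)))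
def K2 (u v Y0 Y1 : Sm) : Sm :=
  u * (D 0 lm * Y1 - D 1 lm * Y0) + lm * (kk 2 * (Y1 * D 0 u) - kk 2 * (Y0 * D 1 u)
    + u * (D 0 Y1 - D 1 Y0) - kk 2 * (v * (D 0 Y0 + D 1 Y1)))

def W0 (f a b u v p Y0 Y1 k1 k2 : Sm) : Sm :=
  lm * ((Y0 * u + Y1 * v) * a + (Y0 * v - Y1 * u) * b) + ph * Y0 * NS a b u v
  + k1 * D 0 f - D 0 k1 * f - kk 2 * (w0 * k1 * f) + kk 2 * (k2 * D 1 f) - kk 2 * (w1 * k2 * f)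
  - kk 3 * (p * Y1 * f)
def W1 (f a b u v p Y0 Y1 k1 k2 : Sm) : Sm :=
  lm * ((Y0 * u + Y1 * v) * b - (Y0 * v - Y1 * u) * a) + ph * Y1 * NS a b u v
  - k1 * D 1 f + D 1 k1 * f + kk 2 * (w1 * k1 * f) - kk 2 * (D 0 k2 * f) - kk 2 * (w0 * k2 * f)
  + kk 3 * (p * Y0 * f)

/-- remaining coefficient of `f`. -/
def remS (p Y0 Y1 k1 k2 : Sm) : Sm :=
  D 0 (D 0 k1) - D 1 (D 1 k1) + kk 2 * D 0 (w0 * k1) - kk 2 * D 1 (w1 * k1)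
  + kk 2 * D 0 (D 1 k2) + kk 2 * D 0 (w1 * k2) + kk 2 * D 1 (w0 * k2)
  - ph * (Y1 * D 0 (lm * p) - Y0 * D 1 (lm * p))
  + kk 3 * (D 0 (p * Y1) - D 1 (p * Y0))

lemma D_lm_ph (a) : D a ph * lm + ph * D a lm = 0 := by
  rw [← D_mul, ph_lm, D_one]

lemma lS_eq (f u v p Y0 Y1 : Sm) :
    lS f (aS f) (bS f) u v p Y0 Y1 =
      D 0 (W0 f (aS f) (bS f) u v p Y0 Y1 (K1 u v Y0 Y1) (K2 u v Y0 Y1))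
      + D 1 (W1 f (aS f) (bS f) u v p Y0 Y1 (K1 u v Y0 Y1) (K2 u v Y0 Y1))
      + f * remS p Y0 Y1 (K1 u v Y0 Y1) (K2 u v Y0 Y1) := by
  have main : ∀ a b k1 k2 : Sm, a = aS f → b = bS f → k1 = K1 u v Y0 Y1 → k2 = K2 u v Y0 Y1 →
     lS f a b u v p Y0 Y1 = D 0 (W0 f a b u v p Y0 Y1 k1 k2) + D 1 (W1 f a b u v p Y0 Y1 k1 k2)
      + f * remS p Y0 Y1 k1 k2 := by
    intro a b k1 k2 ha hb h1 h2
    have e0 := D_lm_ph 0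
    have e1 := D_lm_ph 1
    have ep := ph_lm
    apply sm_ext; intro x
    replace ha := congrArg (fun g => ev g x) ha
    replace hb := congrArg (fun g => ev g x) hb
    replace h1 := congrArg (fun g => ev g x) h1
    replace h2 := congrArg (fun g => ev g x) h2
    replace e0 := congrArg (fun g => ev g x) e0
    replace e1 := congrArg (fun g => ev g x) e1
    replace ep := congrArg (fun g => ev g x) ep
    simp only [aS, bS, K1, K2, ev_add, ev_mul, ev_sub, ev_neg, ev_kk, ev_zero, ev_one] at ha hb h1 h2 e0 e1 ep
    simp only [lS, W0, W1, remS, NS, D_add, D_mul, D_sub, D_neg, D_kk, D_comm, ev_add, ev_mul, ev_sub, ev_neg, ev_kk, ev_zero, ev_one]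
    linear_combination (ev lm x * (ev Y0 x * (ev u x * (ev (D 0 a) x + ev (D 1 b) x)
          + ev v x * (ev (D 0 b) x - ev (D 1 a) x) + ev a x * (ev (D 0 u) x + ev (D 1 v) x)
          + ev b x * (ev (D 0 v) x - ev (D 1 u) x))
        + ev Y1 x * (ev v x * (ev (D 0 a) x + ev (D 1 b) x)
          - ev u x * (ev (D 0 b) x - ev (D 1 a) x) + ev b x * (ev (D 0 u) x + ev (D 1 v) x)
          - ev a x * (ev (D 0 v) x - ev (D 1 u) x)))
        + 3 * ev p x * (ev (D 1 f) x * ev Y0 x - ev (D 0 f) x * ev Y1 x)) * ep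
      - (ev u x * ev a x + ev v x * ev b x) * (ev Y0 x * (ev lm x * e0 - ev (D 0 lm) x * ep)
        + ev Y1 x * (ev lm x * e1 - ev (D 1 lm) x * ep)
        + ev lm x * (ev (D 0 Y0) x + ev (D 1 Y1) x) * ep)
      - ev a x * h1 - ev b x * h2 + ev k1 x * ha + ev k2 x * hb
  exact main _ _ _ _ rfl rfl rfl rfl

lemma D_vanish (a) (g : Sm) (V : Set Pt) (hV : IsOpen V) (hg : ∀ x ∈ V, ev g x = 0) :
    ∀ x ∈ V, ev (D a g) x = 0 := by
  intro x hx
  have h : (fun y => ev g y) =ᶠ[nhds x] fun _ => (0 : ℝ) := by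
    filter_upwards [hV.mem_nhds hx] with y hy using hg y hy
  change fderiv ℝ (fun y => ev g y) x _ = 0
  rw [h.fderiv_eq]; simp

set_option maxHeartbeats 4000000 in
lemma rem_zero (u v Y0 Y1 : Sm) (V : Set Pt) (hV : IsOpen V)
    (k1 : ∀ x ∈ V, ev (D 0 Y0 - D 1 Y1) x = 0) (k2 : ∀ x ∈ V, ev (D 0 Y1 + D 1 Y0) x = 0) (x : Pt) (hx : x ∈ V) :
    ev (remS (pS u v) Y0 Y1 (K1 u v Y0 Y1) (K2 u v Y0 Y1)) x + ev (lm * hS (psS Y0 Y1) u v) x = 0 := by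
  have a1 := k1 x hx
  have b1 := k2 x hx
  have a0 := fun i => D_vanish i _ V hV k1
  have b0 := fun i => D_vanish i _ V hV k2
  have a00 := fun i j => D_vanish j _ V hV (a0 i) x hx
  have b00 := fun i j => D_vanish j _ V hV (b0 i) x hx
  have c0 := a0 0 x hx
  have c1 := a0 1 x hx
  have d0 := b0 0 x hx
  have d1 := b0 1 x hx
  have c00 := a00 0 0
  have c01 := a00 1 0
  have c11 := a00 1 1
  have d00 := b00 0 0
  have d01 := b00 1 0
  have d11 := b00 1 1
  clear a0 b0 a00 b00
  simp only [D_sub, D_add, ev_sub, ev_add, D_comm] at a1 b1 c0 c1 d0 d1 c00 c01 c11 d00 d01 d11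
  have r1 : ev (D 1 Y1) x = ev (D 0 Y0) x := by linarith
  have r2 : ev (D 1 Y0) x = - ev (D 0 Y1) x := by linarith
  have r3 : ev (D 0 (D 1 Y1)) x = ev (D 0 (D 0 Y0)) x := by linarith
  have r4 : ev (D 0 (D 1 Y0)) x = - ev (D 0 (D 0 Y1)) x := by linarith
  have r5 : ev (D 1 (D 1 Y1)) x = - ev (D 0 (D 0 Y1)) x := by linarith
  have r6 : ev (D 1 (D 1 Y0)) x = - ev (D 0 (D 0 Y0)) x := by linarith
  have r7 : ev (D 0 (D 0 (D 1 Y1))) x = ev (D 0 (D 0 (D 0 Y0))) x := by linarith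
  have r8 : ev (D 0 (D 0 (D 1 Y0))) x = - ev (D 0 (D 0 (D 0 Y1))) x := by linarith
  have r9 : ev (D 0 (D 1 (D 1 Y1))) x = - ev (D 0 (D 0 (D 0 Y1))) x := by linarith
  have r10 : ev (D 0 (D 1 (D 1 Y0))) x = - ev (D 0 (D 0 (D 0 Y0))) x := by linarith
  have r11 : ev (D 1 (D 1 (D 1 Y1))) x = - ev (D 0 (D 0 (D 0 Y0))) x := by linarith
  have r12 : ev (D 1 (D 1 (D 1 Y0))) x = ev (D 0 (D 0 (D 0 Y1))) x := by linarith
  simp only [remS, pS, K1, K2, hS, psS, w0, w1, ph, D0_lm, D1_lm, D_add, D_mul, D_sub, D_neg, D_kk,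
    D0_X0, D0_X1, D1_X0, D1_X1, D_zero, D_one, D0_tS, D1_tS, D0_sS, D1_sS, D_comm, lm,
    mul_zero, zero_mul, add_zero, zero_add, mul_one, one_mul, neg_zero, sub_zero]
  simp only [ev_add, ev_mul, ev_sub, ev_neg, ev_kk, ev_zero, ev_one, r1, r2, r3, r4, r5, r6, r7, r8, r9, r10, r11, r12, ev_tS]
  have hs := (sS_pos x).ne'
  have hss : ev sS x = 1 + ev X0 x ^ 2 + ev X1 x ^ 2 := by rw [ev_sS, ev_X0, ev_X1]
  generalize ev X0 x = X at *
  generalize ev X1 x = Z at *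
  generalize ev sS x = s at *
  field_simp
  subst hss
  ring

/-! ## Integration -/

lemma integrable_of_vanish (K : Set Pt) (hK : IsCompact K) (g : Sm)
    (hg : ∀ x ∈ Kᶜ, ev g x = 0) : Integrable (fun x => ev g x) := by
  apply (ev_smooth g).continuous.integrable_of_hasCompactSupport
  exact HasCompactSupport.intro hK (fun x hx => hg x hx)

lemma integral_D_eq_zero (K : Set Pt) (hK : IsCompact K) (g : Sm) (a : Fin 2)
    (hg : ∀ x ∈ Kᶜ, ev g x = 0) : ∫ x, ev (D a g) x = 0 := by
  have hD := D_vanish a g Kᶜ hK.isClosed.isOpen_compl hg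
  have i1 := integrable_of_vanish K hK g hg
  have i2 := integrable_of_vanish K hK (D a g) hD
  have := integral_mul_fderiv_eq_neg_fderiv_mul_of_integrable (μ := (volume : Measure Pt))
    (f := fun _ : Pt => (1 : ℝ)) (g := fun x => ev g x) (v := Pi.single a 1)
    (by simp) (by simp only [one_mul]; exact i2) (by simp only [one_mul]; exact i1)
    (fun x _ => differentiableAt_const _) (fun x _ => ev_diff g x)
  simp only [one_mul] at this
  change ∫ x, fderiv ℝ (fun y => ev g y) x (Pi.single a 1) = 0
  rw [this]; simp

lemma core (U : Set Pt) (hU : IsOpen U) (f u v Y0 Y1 : Sm)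
    (k1 : ∀ x ∈ U, ev (D 0 Y0 - D 1 Y1) x = 0) (k2 : ∀ x ∈ U, ev (D 0 Y1 + D 1 Y0) x = 0)
    (hc : HasCompactSupport (fun x => ev f x)) (hs : tsupport (fun x => ev f x) ⊆ U) :
    ∫ x in U, ev (lS f (aS f) (bS f) u v (pS u v) Y0 Y1) x =
      - ∫ x in U, ev (rS f (psS Y0 Y1) u v) x := by
  set K := tsupport (fun x => ev f x) with hKdef
  have hK : IsCompact K := hc
  have hO : IsOpen Kᶜ := hK.isClosed.isOpen_compl
  have f0 : ∀ x ∈ Kᶜ, ev f x = 0 := fun x hx => image_eq_zero_of_notMem_tsupport hx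
  have f1 := fun i => D_vanish i f Kᶜ hO f0
  have f2 := fun i j => D_vanish j _ Kᶜ hO (f1 i)
  have ha : ∀ x ∈ Kᶜ, ev (aS f) x = 0 := by
    intro x hx
    simp [aS, ev_add, ev_sub, ev_mul, f1 0 x hx, f1 1 x hx, f2 0 0 x hx, f2 1 1 x hx]
  have hb : ∀ x ∈ Kᶜ, ev (bS f) x = 0 := by
    intro x hx
    simp [bS, ev_add, ev_sub, ev_mul, f1 0 x hx, f1 1 x hx, f2 1 0 x hx]
  have hN : ∀ x ∈ Kᶜ, ev (NS (aS f) (bS f) u v) x = 0 := by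
    intro x hx
    simp [NS, ev_add, ev_mul, ha x hx, hb x hx]
  have hL : ∀ x ∈ Kᶜ, ev (lS f (aS f) (bS f) u v (pS u v) Y0 Y1) x = 0 := by
    intro x hx
    simp [lS, ev_add, ev_sub, ev_mul, f0 x hx, f1 0 x hx, f1 1 x hx, ha x hx, hb x hx,
      D_vanish 0 _ _ hO ha x hx, D_vanish 1 _ _ hO ha x hx, D_vanish 0 _ _ hO hb x hx,
      D_vanish 1 _ _ hO hb x hx, D_vanish 0 _ _ hO hN x hx, D_vanish 1 _ _ hO hN x hx]
  have hR : ∀ x ∈ Kᶜ, ev (rS f (psS Y0 Y1) u v) x = 0 := by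
    intro x hx
    simp [rS, ev_mul, f0 x hx]
  set V0 := W0 f (aS f) (bS f) u v (pS u v) Y0 Y1 (K1 u v Y0 Y1) (K2 u v Y0 Y1) with hV0
  set V1 := W1 f (aS f) (bS f) u v (pS u v) Y0 Y1 (K1 u v Y0 Y1) (K2 u v Y0 Y1) with hV1
  have h0 : ∀ x ∈ Kᶜ, ev V0 x = 0 := by
    intro x hx
    simp [hV0, W0, ev_add, ev_sub, ev_mul, f0 x hx, f1 0 x hx, f1 1 x hx, ha x hx, hb x hx, hN x hx]
  have h1 : ∀ x ∈ Kᶜ, ev V1 x = 0 := by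
    intro x hx
    simp [hV1, W1, ev_add, ev_sub, ev_mul, f0 x hx, f1 0 x hx, f1 1 x hx, ha x hx, hb x hx, hN x hx]
  have key : ∀ x, ev (lS f (aS f) (bS f) u v (pS u v) Y0 Y1) x + ev (rS f (psS Y0 Y1) u v) x
      = ev (D 0 V0) x + ev (D 1 V1) x := by
    intro x
    by_cases hx : x ∈ K
    · have hr := rem_zero u v Y0 Y1 U hU k1 k2 x (hs hx)
      rw [lS_eq, ← hV0, ← hV1]
      simp only [rS, ev_add, ev_mul] at hr ⊢
      linear_combination ev f x * hr
    · rw [hL x hx, hR x hx, D_vanish 0 _ _ hO h0 x hx, D_vanish 1 _ _ hO h1 x hx]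
  rw [setIntegral_eq_integral_of_forall_compl_eq_zero (fun x hx => hL x (fun h => hx (hs h))),
    setIntegral_eq_integral_of_forall_compl_eq_zero (fun x hx => hR x (fun h => hx (hs h)))]
  have e1 := integral_add (integrable_of_vanish K hK _ hL) (integrable_of_vanish K hK _ hR)
  have e2 := integral_add (integrable_of_vanish K hK _ (D_vanish 0 _ _ hO h0))
    (integrable_of_vanish K hK _ (D_vanish 1 _ _ hO h1))
  rw [integral_D_eq_zero K hK V0 0 h0, integral_D_eq_zero K hK V1 1 h1] at e2
  simp only [key] at e1
  rw [e2] at e1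
  linarith

lemma left_eq (f u v Y0 Y1 : Sm) (x : Pt) :
    (∑ A, Vm Y0 Y1 x A *
          ((∑ B, Tm u v x A B * divUpT (Ften (fun y => ev f y)) x B)
            + (∑ B, Ften (fun y => ev f y) x A B * divUpT (Tm u v) x B)
            + (1/2) * pd A (fun y => ∑ B, ∑ D, ∑ b, ∑ d,
                Tm u v y B D * rndInv y B b * rndInv y D d * Ften (fun y => ev f y) y b d) x
            - ev f x * (∑ b, ∑ c, rndInv x b c * cdT2 (fun y => Pten (Tm u v) y) x c b A)
            - 3 * ∑ B, ∑ b, Pten (Tm u v) x B A * rndInv x B b * pd b (fun y => ev f y) x)) * aDen x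
    = ev (lS f (aS f) (bS f) u v (pS u v) Y0 Y1) x := by
  have hP : Pten (Tm u v) x = Am (pS u v) x := congrFun (Pten_Tm u v) x
  rw [Ften_eq, Pten_Tm, hP, aDen_eq]
  obtain ⟨d1, d2⟩ := divUpT_Tm (aS f) (bS f) x
  obtain ⟨d3, d4⟩ := divUpT_Tm u v x
  obtain ⟨d5, d6⟩ := divP (pS u v) x
  have hN : (fun y => ∑ B, ∑ D, ∑ b, ∑ d,
      Tm u v y B D * rndInv y B b * rndInv y D d * Tm (aS f) (bS f) y b d) =
      fun y => ev (kk 2 * NS (aS f) (bS f) u v) y := by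
    funext y
    simp [Tm, rndInv_eq, Fin.sum_univ_two, NS, ev_add, ev_mul, ev_kk]
    ring
  have hp := ph_lm_ev x
  rw [hN, Fin.sum_univ_two, d5, d6]
  simp only [Fin.sum_univ_two, d1, d2, d3, d4, pd_ev, rndInv_eq]
  generalize aS f = a
  generalize bS f = b
  generalize pS u v = p
  simp [Vm, Tm, Am, lS, D_mul, D_kk, ev_add, ev_mul, ev_sub, ev_kk, ev_zero]
  linear_combination ev ph x * ev f x *
    (ev Y0 x * (ev (D 1 lm) x * ev p x + ev lm x * ev (D 1 p) x)
      - ev Y1 x * (ev (D 0 lm) x * ev p x + ev lm x * ev (D 0 p) x)) * hp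

lemma right_eq (f u v Y0 Y1 : Sm) (x : Pt) :
    ev f x * (∑ A, ∑ B, ∑ a, ∑ b,
            rndInv x A a * rndInv x B b * hess (fun y => divg (Vm Y0 Y1) y) x a b * Tm u v x A B)
            * aDen x = ev (rS f (psS Y0 Y1) u v) x := by
  rw [divg_eq, aDen_eq]
  obtain ⟨h1, h2, h3, h4⟩ := hess_vals (psS Y0 Y1) x
  have hp := ph_lm_ev x
  simp only [Fin.sum_univ_two, rndInv_eq, h1, h2, h3, h4]
  generalize psS Y0 Y1 = g
  have : ev (rS f g u v) x = (ev ph x * ev lm x) * ev (rS f g u v) x := by rw [hp, one_mul]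
  rw [this]
  simp [Tm, rS, hS, ev_add, ev_mul, ev_sub, ev_kk]
  ring

/-- for a conformal Killing field `Y^A` on an open set `U ⊆ S²`,
`f` smooth and compactly supported in `U`, and `C_{AB}` a smooth symmetric traceless
2-tensor on `S²`, with `F_{AB} = 2∇_A∇_B f - (Δf)σ_{AB}` and
`P_{BA} = ∇_B∇^E C_{EA} - ∇_A∇^E C_{EB}`:
`¼∫_U Y^A [C_{AB}∇_D F^{BD} + F_{AB}∇_D C^{BD} + ½∇_A(C_{BD}F^{BD}) - f∇^B P_{BA}
  - 3P_{BA}∇^B f] = -¼ ∫_U f ∇^A∇^B(∇_C Y^C) C_{AB}`. -/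
theorem conformalKilling_nonradiative_integral
    (U : Set Pt) (hU : IsOpen U)
    (Y : Pt → Fin 2 → ℝ) (hY : SmoothVec Y)
    (hCKE : ConformalKilling Y U)
    (f : Pt → ℝ) (hf : ContDiff ℝ (⊤ : ℕ∞) f)
    (hfsupp : HasCompactSupport f) (hfU : tsupport f ⊆ U)
    (C : Pt → Fin 2 → Fin 2 → ℝ)
    (hCsmooth : ∀ a b, ContDiff ℝ (⊤ : ℕ∞) (fun x => C x a b))
    (hCsymm : ∀ x a b, C x a b = C x b a)
    (hCtr : ∀ x, ∑ a, ∑ b, rndInv x a b * C x a b = 0) :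
    (1/4) * (∫ x in U,
        (∑ A, Y x A *
          ((∑ B, C x A B * divUpT (Ften f) x B)
            + (∑ B, Ften f x A B * divUpT C x B)
            + (1/2) * pd A (fun y => ∑ B, ∑ D, ∑ b, ∑ d,
                C y B D * rndInv y B b * rndInv y D d * Ften f y b d) x
            - f x * (∑ b, ∑ c, rndInv x b c * cdT2 (fun y => Pten C y) x c b A)
            - 3 * ∑ B, ∑ b, Pten C x B A * rndInv x B b * pd b f x)) * aDen x)
      = -(1/4) * ∫ x in U,
          f x * (∑ A, ∑ B, ∑ a, ∑ b,
            rndInv x A a * rndInv x B b * hess (fun y => divg Y y) x a b * C x A B)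
            * aDen x := by
  have hC11 : ∀ x, C x 1 1 = - C x 0 0 := by
    intro x
    have h := hCtr x
    have hp := ph_lm_ev x
    simp [rndInv_eq, Fin.sum_univ_two] at h
    linear_combination ev ph x * h - (C x 0 0 + C x 1 1) * hp
  obtain ⟨fS, rfl⟩ : ∃ g : Sm, f = fun y => ev g y := ⟨⟨f, hf⟩, rfl⟩
  obtain ⟨Y0, Y1, rfl⟩ : ∃ g h : Sm, Y = Vm g h := by
    refine ⟨⟨_, hY 0⟩, ⟨_, hY 1⟩, ?_⟩
    funext x A
    fin_cases A <;> simp [Vm, ev]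
  obtain ⟨u, v, rfl⟩ : ∃ g h : Sm, C = Tm g h := by
    refine ⟨⟨_, hCsmooth 0 0⟩, ⟨_, hCsmooth 0 1⟩, ?_⟩
    funext x A B
    fin_cases A <;> fin_cases B <;> simp [Tm, ev, hC11, hCsymm x 1 0]
  have hk := CKE_eq Y0 Y1 U hCKE
  have main := core U hU fS u v Y0 Y1 (fun x hx => (hk x hx).1) (fun x hx => (hk x hx).2) hfsupp hfU
  simp only [left_eq, right_eq]
  rw [main]; ring
end
end
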